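/- arXiv:1802.10286 — 4 statements merged into one kernel-verified Lean document; each statement's English description precedes it below -/
import Mathlib

section
/- At ε = ε* one has q_1 < 0, and for every τ ≥ 0 the derivative of λ ↦ D_1(λ; τ, ε*) at λ = 0, which equals p_1 + s_1 − τ q_1, is strictly positive; consequently λ = 0 is a simple root of D_1(·; τ, ε*) for every τ ≥ 0. -/
/-- `p_k` coefficient of the `k`-th mode characteristic function. -/
noncomputable def pk (ε : ℝ) (k : ℕ) : ℝ := 4 * (ε + 1) * (k : ℝ) ^ 2 * Real.pi ^ 2 + 1

/-- `r_k` coefficient of the `k`-th mode characteristic function. -/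
noncomputable def rk (ε : ℝ) (k : ℕ) : ℝ :=
  16 * ε * (k : ℝ) ^ 4 * Real.pi ^ 4 + 4 * (k : ℝ) ^ 2 * Real.pi ^ 2

/-- `s_k` coefficient of the `k`-th mode characteristic function. -/
noncomputable def sk : ℝ := 23 / 3

/-- `q_k` coefficient of the `k`-th mode characteristic function. -/
noncomputable def qk (ε : ℝ) (k : ℕ) : ℝ :=
  4 * (9 * ε - 4 / 3) * (k : ℝ) ^ 2 * Real.pi ^ 2 + 9

/-- The `k`-th mode characteristic function
`D_k(λ; τ, ε) = λ² + p_k λ + r_k + (s_k λ + q_k) e^{-λτ}`. -/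
noncomputable def Dk (ε τ : ℝ) (k : ℕ) (z : ℂ) : ℂ :=
  z ^ 2 + (pk ε k : ℂ) * z + (rk ε k : ℂ) +
    ((sk : ℂ) * z + (qk ε k : ℂ)) * Complex.exp (-z * (τ : ℂ))

/-- The critical diffusion ratio `ε* = (4π²/3 - 9)/(16π⁴ + 36π²)`. -/
noncomputable def epsStar : ℝ := (4 * Real.pi ^ 2 / 3 - 9) / (16 * Real.pi ^ 4 + 36 * Real.pi ^ 2)

/-- The zeroth-mode characteristic function `D_0(λ; τ) = λ² + λ + ((23/3)λ + 9)e^{-λτ}`. -/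
noncomputable def D0 (τ : ℝ) (z : ℂ) : ℂ :=
  z ^ 2 + z + ((23 / 3 : ℂ) * z + 9) * Complex.exp (-z * (τ : ℂ))

/-- The critical Hopf frequency `ω* = √((520 + √296644)/18)`. -/
noncomputable def omegaStar : ℝ := Real.sqrt ((520 + Real.sqrt 296644) / 18)

/-!
A root of `D_k(·; τ, ε)` at `0` amounts to `r_k + q_k = 0`, and for `k = 1` this sum is affine in
`ε` with zero `ε*`. Since `ε* > 0` (because `π² > 27/4`), `r_1` is positive at `ε*`, which forces
`q_1 = -r_1 < 0`. A delay therefore only increases the derivative `p_1 + s_1 - τ q_1` at `0`, which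
is already positive for `τ = 0`.
-/

theorem pk_pos {ε : ℝ} (hε : -1 ≤ ε) (k : ℕ) : 0 < pk ε k := by
  have hε' : 0 ≤ ε + 1 := by linarith
  unfold pk
  positivity

theorem rk_pos {ε : ℝ} (hε : 0 ≤ ε) {k : ℕ} (hk : k ≠ 0) : 0 < rk ε k := by
  unfold rk
  positivity

theorem sk_pos : 0 < sk := by
  norm_num [sk]

theorem epsStar_pos : 0 < epsStar := by
  have hnum : 0 < 4 * Real.pi ^ 2 / 3 - 9 := by nlinarith [Real.pi_gt_three]
  exact div_pos hnum (by positivity)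

theorem rk_one_add_qk_one (ε : ℝ) :
    rk ε 1 + qk ε 1 = (16 * Real.pi ^ 4 + 36 * Real.pi ^ 2) * (ε - epsStar) := by
  have hden : 16 * Real.pi ^ 4 + 36 * Real.pi ^ 2 ≠ 0 := by positivity
  rw [mul_sub, epsStar, mul_div_cancel₀ _ hden, rk, qk]
  push_cast
  ring

theorem rk_epsStar_one_add_qk_epsStar_one : rk epsStar 1 + qk epsStar 1 = 0 := by
  rw [rk_one_add_qk_one, sub_self, mul_zero]

theorem qk_epsStar_one_neg : qk epsStar 1 < 0 := by
  have hr : 0 < rk epsStar 1 := rk_pos epsStar_pos.le one_ne_zero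
  linarith [rk_epsStar_one_add_qk_epsStar_one]

theorem Dk_apply_zero (ε τ : ℝ) (k : ℕ) : Dk ε τ k 0 = ((rk ε k + qk ε k : ℝ) : ℂ) := by
  simp [Dk]

theorem hasDerivAt_Dk (ε τ : ℝ) (k : ℕ) (z : ℂ) :
    HasDerivAt (Dk ε τ k)
      (2 * z + pk ε k + (sk - τ * (sk * z + qk ε k)) * Complex.exp (-z * τ)) z := by
  have hid : HasDerivAt (fun w : ℂ ↦ w) 1 z := hasDerivAt_id z
  have hpoly := ((hid.pow 2).add (hid.const_mul (pk ε k : ℂ))).add_const (rk ε k : ℂ)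
  have hlin := (hid.const_mul (sk : ℂ)).add_const (qk ε k : ℂ)
  have hexp := (hid.neg.mul_const (τ : ℂ)).cexp
  refine (hpoly.add (hlin.mul hexp)).congr_deriv ?_
  simp only [Pi.neg_apply]
  ring

theorem hasDerivAt_Dk_zero (ε τ : ℝ) (k : ℕ) :
    HasDerivAt (Dk ε τ k) ((pk ε k + sk - τ * qk ε k : ℝ) : ℂ) 0 := by
  refine (hasDerivAt_Dk ε τ k 0).congr_deriv ?_
  simp only [mul_zero, zero_add, neg_zero, zero_mul, Complex.exp_zero, mul_one]
  push_cast
  ring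

theorem pk_add_sk_sub_mul_qk_pos {ε τ : ℝ} {k : ℕ} (hε : -1 ≤ ε) (hτ : 0 ≤ τ)
    (hq : qk ε k ≤ 0) : 0 < pk ε k + sk - τ * qk ε k := by
  have hdelay : τ * qk ε k ≤ 0 := mul_nonpos_of_nonneg_of_nonpos hτ hq
  linarith [pk_pos hε k, sk_pos]

/-- At `ε = ε*` one has `q_1 < 0`, and for every `τ ≥ 0` the derivative of
`λ ↦ D_1(λ; τ, ε*)` at `λ = 0`, which equals `p_1 + s_1 - τ q_1`, is strictly positive;
consequently `λ = 0` is a simple root of `D_1(·; τ, ε*)` for every `τ ≥ 0`. -/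
theorem D1_zero_simple_root :
    qk epsStar 1 < 0 ∧
    ∀ τ : ℝ, 0 ≤ τ →
      HasDerivAt (Dk epsStar τ 1) ((pk epsStar 1 + sk - τ * qk epsStar 1 : ℝ) : ℂ) 0 ∧
      0 < pk epsStar 1 + sk - τ * qk epsStar 1 ∧
      Dk epsStar τ 1 0 = 0 ∧
      ((pk epsStar 1 + sk - τ * qk epsStar 1 : ℝ) : ℂ) ≠ 0 := by
  refine ⟨qk_epsStar_one_neg, fun τ hτ ↦ ?_⟩
  have hpos : 0 < pk epsStar 1 + sk - τ * qk epsStar 1 :=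
    pk_add_sk_sub_mul_qk_pos (by linarith [epsStar_pos]) hτ qk_epsStar_one_neg.le
  have hroot : Dk epsStar τ 1 0 = 0 := by
    rw [Dk_apply_zero, rk_epsStar_one_add_qk_epsStar_one, Complex.ofReal_zero]
  exact ⟨hasDerivAt_Dk_zero epsStar τ 1, hpos, hroot, Complex.ofReal_ne_zero.mpr hpos.ne'⟩
end

section
/- For every ε with 0 < ε < ε* and every τ ≥ 0, there exists a real number λ > 0 such that D_1(λ; τ, ε) = 0; hence for 0 < ε < ε* the constant steady state is linearly unstable for every delay. -/
/-!
On the real axis `D_k` is real valued, with value `r_k + q_k` at `0`, and it tends to `+∞` at `+∞`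
because `s_k > 0` makes the delayed term eventually nonnegative. The intermediate value theorem
therefore gives a positive root as soon as `r_k + q_k < 0`. Since `r_k + q_k` is affine in `ε` with
positive slope for `k ≠ 0`, this condition is an upper bound on `ε`, namely `ε < ε*` for `k = 1`.
-/

open Filter Set

/-- The characteristic function `x² + p x + r + (s x + q) e^{-xτ}` of a second-order linear delay
equation, at a real argument `x`. It describes `Dk` on the real axis. -/
noncomputable def delayCharFun (p r s q τ x : ℝ) : ℝ :=
  x ^ 2 + p * x + r + (s * x + q) * Real.exp (-x * τ)

/-- The critical diffusion ratio of mode `k`, for which `r_k + q_k = 0`; it extends `epsStar`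
from the first mode to all modes `k ≠ 0`. At `k = 0` the denominator vanishes and the value `0`
carries no meaning. -/
noncomputable def epsCrit (k : ℕ) : ℝ :=
  (4 * (k : ℝ) ^ 2 * Real.pi ^ 2 / 3 - 9) /
    (16 * (k : ℝ) ^ 4 * Real.pi ^ 4 + 36 * (k : ℝ) ^ 2 * Real.pi ^ 2)

section DelayCharFun

variable (p r s q τ : ℝ)

theorem delayCharFun_zero : delayCharFun p r s q τ 0 = r + q := by
  simp [delayCharFun]

theorem continuous_delayCharFun : Continuous (delayCharFun p r s q τ) := by
  unfold delayCharFun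
  fun_prop

theorem tendsto_quadratic_atTop :
    Tendsto (fun x : ℝ => x ^ 2 + p * x + r) atTop atTop := by
  have hfactored : Tendsto (fun x : ℝ => x * (x + p) + r) atTop atTop :=
    tendsto_atTop_add_const_right _ r
      (tendsto_id.atTop_mul_atTop₀ (tendsto_atTop_add_const_right _ p tendsto_id))
  refine hfactored.congr fun x => ?_
  ring

variable {s}

theorem eventually_linear_mul_exp_nonneg (hs : 0 < s) :
    ∀ᶠ x : ℝ in atTop, 0 ≤ (s * x + q) * Real.exp (-x * τ) := by
  have hlinear : Tendsto (fun x : ℝ => s * x + q) atTop atTop :=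
    tendsto_atTop_add_const_right _ q (tendsto_id.const_mul_atTop hs)
  filter_upwards [hlinear.eventually_ge_atTop 0] with x hx
  exact mul_nonneg hx (Real.exp_pos _).le

theorem tendsto_delayCharFun_atTop (hs : 0 < s) :
    Tendsto (delayCharFun p r s q τ) atTop atTop :=
  tendsto_atTop_mono' atTop
    ((eventually_linear_mul_exp_nonneg q τ hs).mono fun _ => le_add_of_nonneg_right)
    (tendsto_quadratic_atTop p r)

variable {r q}

theorem exists_pos_delayCharFun_eq_zero (hs : 0 < s) (hrq : r + q < 0) :
    ∃ x, 0 < x ∧ delayCharFun p r s q τ x = 0 := by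
  have hneg : delayCharFun p r s q τ 0 < 0 := by rwa [delayCharFun_zero]
  obtain ⟨x, hx, hroot⟩ := isPreconnected_Ici.intermediate_value_Ici self_mem_Ici
    (le_principal_iff.2 (Ici_mem_atTop 0)) (continuous_delayCharFun p r s q τ).continuousOn
    (tendsto_delayCharFun_atTop p r q τ hs) (mem_Ici.2 hneg.le)
  have hne : x ≠ 0 := by
    rintro rfl
    exact hneg.ne hroot
  exact ⟨x, lt_of_le_of_ne hx hne.symm, hroot⟩

end DelayCharFun

theorem Dk_ofReal (ε τ : ℝ) (k : ℕ) (x : ℝ) :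
    Dk ε τ k x = delayCharFun (pk ε k) (rk ε k) sk (qk ε k) τ x := by
  simp [Dk, delayCharFun]

theorem epsCrit_one : epsCrit 1 = epsStar := by
  simp [epsCrit, epsStar]

theorem rk_add_qk (ε : ℝ) (k : ℕ) :
    rk ε k + qk ε k =
      ε * (16 * (k : ℝ) ^ 4 * Real.pi ^ 4 + 36 * (k : ℝ) ^ 2 * Real.pi ^ 2) -
        (4 * (k : ℝ) ^ 2 * Real.pi ^ 2 / 3 - 9) := by
  unfold rk qk
  ring

theorem rk_add_qk_neg_iff (ε : ℝ) {k : ℕ} (hk : k ≠ 0) :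
    rk ε k + qk ε k < 0 ↔ ε < epsCrit k := by
  rw [rk_add_qk, sub_neg, epsCrit, lt_div_iff₀ (by positivity)]

theorem D1_positive_real_root_general {ε : ℝ} {k : ℕ} (hk : k ≠ 0) (hε : ε < epsCrit k) (τ : ℝ) :
    ∃ lam : ℝ, 0 < lam ∧ Dk ε τ k (lam : ℂ) = 0 := by
  have hs : 0 < sk := by norm_num [sk]
  obtain ⟨x, hx, hroot⟩ :=
    exists_pos_delayCharFun_eq_zero (pk ε k) τ hs ((rk_add_qk_neg_iff ε hk).2 hε)
  exact ⟨x, hx, by rw [Dk_ofReal, hroot, Complex.ofReal_zero]⟩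

/-- For every `ε` with `0 < ε < ε*` and every `τ ≥ 0`, there exists a real `λ > 0`
with `D_1(λ; τ, ε) = 0`; hence for `0 < ε < ε*` the constant steady state is
linearly unstable for every delay. -/
theorem D1_positive_real_root (ε : ℝ) (hε0 : 0 < ε) (hε : ε < epsStar)
    (τ : ℝ) (hτ : 0 ≤ τ) :
    ∃ lam : ℝ, 0 < lam ∧ Dk ε τ 1 ((lam : ℝ) : ℂ) = 0 :=
  D1_positive_real_root_general one_ne_zero (epsCrit_one.symm ▸ hε) τ
end

section
/- There exists a unique τ ∈ (0, 2π/ω*) such that D_0(iω*; τ) = 0; calling this value τ*, it satisfies 0.20 < τ* < 0.21. -/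
/-!
Multiplied by `e^{iωτ}`, a characteristic equation `p + q e^{-iωτ} = 0` asks for the point `-q / p`
of the circle, which has exactly one argument in `(0, 2π)` when `|p| = |q|` and `τ = 0` is not a
root. For `D_0` at `iω`, with `p = -ω² + iω` and `q = 9 + (23/3)iω`, the equation `|p| = |q|` is the
quartic defining `ω*`.

Splitting `p e^{iωτ} = -q` into real and imaginary parts gives `cos ωτ = 4 / (3(ω² + 1))` and
`sin ωτ > 0`. Hence `ωτ` lies just below `π/2`, and a crude bound on `ω*` locates `τ`.
-/

lemma existsUnique_exp_mul_I_eq {z : ℂ} (hz : ‖z‖ = 1) (hz_ne : z ≠ 1) :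
    ∃! θ : ℝ, θ ∈ Set.Ioo 0 (2 * Real.pi) ∧ Complex.exp (θ * Complex.I) = z := by
  -- Rotating by `π` turns `(0, 2π)` into the range of the principal argument without its endpoint.
  have exp_add_pi (φ : ℝ) :
      Complex.exp ((φ + Real.pi : ℝ) * Complex.I) = -Complex.exp (φ * Complex.I) := by
    rw [Complex.ofReal_add, add_mul, Complex.exp_add, Complex.exp_pi_mul_I, mul_neg_one]
  have polar : Complex.exp (Complex.arg (-z) * Complex.I) = -z := by
    simpa only [norm_neg, hz, Complex.ofReal_one, one_mul] using
      Complex.norm_mul_exp_arg_mul_I (-z)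
  have arg_ne_pi : Complex.arg (-z) ≠ Real.pi := fun h => hz_ne <| by
    rw [h, Complex.exp_pi_mul_I] at polar
    exact (neg_injective polar).symm
  refine ⟨Complex.arg (-z) + Real.pi, ⟨⟨?_, ?_⟩, ?_⟩, ?_⟩
  · linarith [Complex.neg_pi_lt_arg (-z)]
  · linarith [(Complex.arg_le_pi (-z)).lt_of_ne arg_ne_pi]
  · rw [exp_add_pi, polar, neg_neg]
  · rintro θ ⟨⟨hθ_pos, hθ_lt⟩, rfl⟩
    have rotated :
        -Complex.exp (θ * Complex.I) = Complex.exp ((θ - Real.pi : ℝ) * Complex.I) := by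
      rw [← neg_eq_iff_eq_neg.mpr (exp_add_pi (θ - Real.pi)), sub_add_cancel]
    rw [rotated, Complex.arg_exp_mul_I,
      (toIocMod_eq_self _).mpr ⟨by linarith, by linarith⟩, sub_add_cancel]

lemma add_mul_exp_neg_eq_zero_iff (p q z : ℂ) :
    p + q * Complex.exp (-z) = 0 ↔ p * Complex.exp z = -q := by
  rw [Complex.exp_neg, ← div_eq_mul_inv, add_div' _ _ _ (Complex.exp_ne_zero z),
    div_eq_zero_iff, or_iff_left (Complex.exp_ne_zero z), add_eq_zero_iff_eq_neg]

lemma existsUnique_add_mul_exp_eq_zero {p q : ℂ} (hpq : ‖p‖ = ‖q‖) (hsum : p + q ≠ 0) {ω : ℝ}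
    (hω : 0 < ω) :
    ∃! τ : ℝ, τ ∈ Set.Ioo 0 (2 * Real.pi / ω) ∧
      p + q * Complex.exp (-(Complex.I * ω) * τ) = 0 := by
  have hp : p ≠ 0 := by
    rintro rfl
    rw [norm_zero, eq_comm, norm_eq_zero] at hpq
    exact hsum (by rw [hpq, add_zero])
  have norm_target : ‖-q / p‖ = 1 := by
    rw [norm_div, norm_neg, ← hpq, div_self (norm_ne_zero_iff.mpr hp)]
  have target_ne_one : -q / p ≠ 1 := fun h =>
    hsum (add_eq_zero_iff_eq_neg.mpr ((div_eq_one_iff_eq hp).mp h).symm)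
  have root_iff (τ : ℝ) : p + q * Complex.exp (-(Complex.I * ω) * τ) = 0 ↔
      Complex.exp ((ω * τ : ℝ) * Complex.I) = -q / p := by
    rw [neg_mul, add_mul_exp_neg_eq_zero_iff, eq_div_iff hp, mul_comm p]
    push_cast
    rw [mul_comm Complex.I, mul_right_comm]
  have mem_iff (τ : ℝ) :
      τ ∈ Set.Ioo 0 (2 * Real.pi / ω) ↔ ω * τ ∈ Set.Ioo 0 (2 * Real.pi) := by
    rw [Set.mem_Ioo, Set.mem_Ioo, lt_div_iff₀' hω, mul_pos_iff_of_pos_left hω]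
  simp only [root_iff, mem_iff]
  exact (mulLeft_bijective₀ ω hω.ne').existsUnique_iff.mp
    (existsUnique_exp_mul_I_eq norm_target target_ne_one)

lemma norm_quadratic_eq_norm_linear_iff (p r s q ω : ℝ) :
    ‖(Complex.I * ω) ^ 2 + p * (Complex.I * ω) + r‖ = ‖s * (Complex.I * ω) + q‖ ↔
      ω ^ 4 + (p ^ 2 - 2 * r - s ^ 2) * ω ^ 2 + r ^ 2 - q ^ 2 = 0 := by
  have quadratic_eq : (Complex.I * ω) ^ 2 + p * (Complex.I * ω) + r =
      (r - ω ^ 2 : ℝ) + (p * ω : ℝ) * Complex.I := by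
    push_cast
    linear_combination (ω : ℂ) ^ 2 * Complex.I_sq
  have linear_eq : s * (Complex.I * ω) + q = (q : ℂ) + (s * ω : ℝ) * Complex.I := by
    push_cast
    ring
  rw [quadratic_eq, linear_eq, Complex.norm_add_mul_I, Complex.norm_add_mul_I,
    Real.sqrt_inj (by positivity) (by positivity), ← sub_eq_zero]
  refine Eq.congr_left ?_
  ring

lemma existsUnique_D0_eq_zero {ω : ℝ} (hω : 0 < ω)
    (hquartic : ω ^ 4 - 520 / 9 * ω ^ 2 - 81 = 0) :
    ∃! τ : ℝ, τ ∈ Set.Ioo 0 (2 * Real.pi / ω) ∧ D0 τ (Complex.I * ω) = 0 := by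
  have norm_eq : ‖(Complex.I * ω) ^ 2 + Complex.I * ω‖ =
      ‖(23 / 3 : ℂ) * (Complex.I * ω) + 9‖ := by
    simpa using (norm_quadratic_eq_norm_linear_iff 1 0 (23 / 3) 9 ω).mpr
      (by linear_combination hquartic)
  refine existsUnique_add_mul_exp_eq_zero norm_eq (fun h => ?_) hω
  have im_eq : ω + 23 / 3 * ω = 0 := by simpa [pow_two] using congrArg Complex.im h
  linarith

lemma re_im_of_D0_eq_zero {ω τ : ℝ} (hω : ω ≠ 0) (hroot : D0 τ (Complex.I * ω) = 0) :
    ω ^ 2 * Real.cos (ω * τ) + ω * Real.sin (ω * τ) = 9 ∧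
      ω * Real.sin (ω * τ) - Real.cos (ω * τ) = 23 / 3 := by
  have exp_eq : Complex.exp (Complex.I * ω * τ) =
      Real.cos (ω * τ) + Real.sin (ω * τ) * Complex.I := by
    rw [mul_assoc, mul_comm, ← Complex.ofReal_mul, Complex.exp_mul_I, Complex.ofReal_cos,
      Complex.ofReal_sin]
  have polar : ((Complex.I * ω) ^ 2 + Complex.I * ω) *
      (Real.cos (ω * τ) + Real.sin (ω * τ) * Complex.I) =
        -((23 / 3 : ℝ) * (Complex.I * ω) + (9 : ℝ)) := by
    rw [← exp_eq, ← add_mul_exp_neg_eq_zero_iff, ← neg_mul]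
    push_cast
    exact hroot
  have re_eq : -(ω ^ 2 * Real.cos (ω * τ)) - ω * Real.sin (ω * τ) = -9 := by
    simpa [pow_two, -Complex.ofReal_cos, -Complex.ofReal_sin, -Complex.ofReal_ofNat]
      using congrArg Complex.re polar
  have im_eq : -(ω ^ 2 * Real.sin (ω * τ)) + ω * Real.cos (ω * τ) = -(23 / 3 * ω) := by
    simpa [pow_two, -Complex.ofReal_cos, -Complex.ofReal_sin, -Complex.ofReal_div]
      using congrArg Complex.im polar
  exact ⟨by linear_combination -re_eq, mul_left_cancel₀ hω (by linear_combination -im_eq)⟩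

lemma cos_sin_of_D0_eq_zero {ω τ : ℝ} (hω : 0 < ω) (hroot : D0 τ (Complex.I * ω) = 0) :
    Real.cos (ω * τ) = 4 / (3 * (ω ^ 2 + 1)) ∧ 0 < Real.sin (ω * τ) := by
  obtain ⟨hre, him⟩ := re_im_of_D0_eq_zero hω.ne' hroot
  have cos_eq : Real.cos (ω * τ) = 4 / (3 * (ω ^ 2 + 1)) := by
    rw [eq_div_iff (by positivity)]
    linear_combination 3 * hre - 3 * him
  have cos_pos : 0 < Real.cos (ω * τ) := cos_eq ▸ by positivity
  exact ⟨cos_eq, pos_of_mul_pos_right (by linarith : 0 < ω * Real.sin (ω * τ)) hω.le⟩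

lemma lt_pi_of_sin_pos {x : ℝ} (hx : x ≤ 2 * Real.pi) (hsin : 0 < Real.sin x) : x < Real.pi := by
  by_contra! h
  have := Real.sin_nonneg_of_nonneg_of_le_pi (x := x - Real.pi) (by linarith) (by linarith)
  rw [Real.sin_sub_pi] at this
  linarith

lemma four_div_lt_cos_mul {ω : ℝ} (hω_gt : 7.5 < ω) (hω_lt : ω < 7.7) :
    4 / (3 * (ω ^ 2 + 1)) < Real.cos (ω * 0.2) := by
  calc 4 / (3 * (ω ^ 2 + 1)) < 0.025 := by
        rw [div_lt_iff₀ (by positivity)]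
        nlinarith
    _ < 0.03 - 0.03 ^ 3 / 6 := by norm_num
    _ < Real.sin 0.03 := Real.sin_gt_sub_cube (x := 0.03) (by norm_num)
    _ ≤ Real.sin (Real.pi / 2 - ω * 0.2) :=
        Real.sin_le_sin_of_le_of_le_pi_div_two (by linarith [Real.pi_pos])
          (by linarith) (by linarith [Real.pi_gt_d4])
    _ = Real.cos (ω * 0.2) := Real.sin_pi_div_two_sub _

lemma delay_bounds_of_D0_eq_zero {ω τ : ℝ} (hω_gt : 7.5 < ω) (hω_lt : ω < 7.7)
    (hτ : τ ∈ Set.Ioo 0 (2 * Real.pi / ω)) (hroot : D0 τ (Complex.I * ω) = 0) :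
    0.20 < τ ∧ τ < 0.21 := by
  have hω : 0 < ω := by linarith
  obtain ⟨cos_eq, sin_pos⟩ := cos_sin_of_D0_eq_zero hω hroot
  have phase_pos : 0 < ω * τ := mul_pos hω hτ.1
  have phase_lt_pi : ω * τ < Real.pi :=
    lt_pi_of_sin_pos ((lt_div_iff₀' hω).mp hτ.2).le sin_pos
  have lower : ω * 0.2 < ω * τ := by
    refine (Real.strictAntiOn_cos.lt_iff_gt ⟨phase_pos.le, phase_lt_pi.le⟩
      ⟨by positivity, by linarith [Real.pi_gt_three]⟩).mp ?_
    exact cos_eq ▸ four_div_lt_cos_mul hω_gt hω_lt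
  have upper : ω * τ < Real.pi / 2 := by
    refine (Real.strictAntiOn_cos.lt_iff_gt
      ⟨by positivity, by linarith⟩ ⟨phase_pos.le, phase_lt_pi.le⟩).mp ?_
    rw [Real.cos_pi_div_two, cos_eq]
    positivity
  constructor
  · linarith [lt_of_mul_lt_mul_left lower hω.le]
  · nlinarith [Real.pi_lt_d4]

lemma omegaStar_sq : omegaStar ^ 2 = (520 + Real.sqrt 296644) / 18 :=
  Real.sq_sqrt (by positivity)

lemma omegaStar_quartic : omegaStar ^ 4 - 520 / 9 * omegaStar ^ 2 - 81 = 0 := by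
  have sq_sqrt : Real.sqrt 296644 ^ 2 = 296644 := Real.sq_sqrt (by norm_num)
  rw [show omegaStar ^ 4 = (omegaStar ^ 2) ^ 2 by ring, omegaStar_sq]
  linear_combination sq_sqrt / 324

lemma lt_omegaStar : 7.5 < omegaStar := by
  have sqrt_gt : 500 < Real.sqrt 296644 := Real.lt_sqrt_of_sq_lt (by norm_num)
  exact Real.lt_sqrt_of_sq_lt (by linarith)

lemma omegaStar_lt : omegaStar < 7.7 := by
  have sqrt_lt : Real.sqrt 296644 < 547 := (Real.sqrt_lt' (by norm_num)).mpr (by norm_num)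
  exact (Real.sqrt_lt' (by norm_num)).mpr (by linarith)

/-- There exists a unique `τ ∈ (0, 2π/ω*)` such that `D_0(iω*; τ) = 0`; calling this
value `τ*`, it satisfies `0.20 < τ* < 0.21`. -/
theorem tauStar_exists_unique :
    (∃! τ : ℝ, τ ∈ Set.Ioo 0 (2 * Real.pi / omegaStar) ∧
      D0 τ (Complex.I * (omegaStar : ℂ)) = 0) ∧
    (∀ τ : ℝ, τ ∈ Set.Ioo 0 (2 * Real.pi / omegaStar) →
      D0 τ (Complex.I * (omegaStar : ℂ)) = 0 → 0.20 < τ ∧ τ < 0.21) := by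
  have omegaStar_pos : 0 < omegaStar := by linarith [lt_omegaStar]
  exact ⟨existsUnique_D0_eq_zero omegaStar_pos omegaStar_quartic,
    fun _ hτ hroot => delay_bounds_of_D0_eq_zero lt_omegaStar omegaStar_lt hτ hroot⟩
end

section
/- For ε = ε*, every τ ≥ 0 and every nonzero real ω, D_1(iω; τ, ε*) ≠ 0; that is, the first-mode characteristic function has no nonzero purely imaginary roots for any delay. (This holds because at ε = ε* one has r_1 + q_1 = 0 and p_1² − s_1² − 2r_1 > 0, so ω⁴ + (p_1² − s_1² − 2r_1)ω² + r_1² − q_1² > 0 for ω ≠ 0.) -/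
/-!
If `D_k(iω) = 0`, then `|(iω)² + p_k iω + r_k| = |s_k iω + q_k|` because the delay factor
`e^{-iωτ}` has modulus one. Squaring eliminates `τ` and leaves
`ω⁴ + (p_k² - s_k² - 2 r_k) ω² + r_k² - q_k² = 0`, which has no solution `ω ≠ 0` as soon as
`s_k² + 2 r_k < p_k²` and `|q_k| ≤ r_k`. For a mode `k ≥ 1` and `ε ≥ 0` only `-q_k ≤ r_k` can fail,
and it holds if and only if `ε` is at least the zero of the increasing affine function
`ε ↦ r_k + q_k`. Among the modes `k ≥ 1` this zero is largest for `k = 1`, where it is `ε*`.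
-/

theorem frequency_quartic_eq_zero {p r s q τ ω : ℝ}
    (h : (Complex.I * ω) ^ 2 + p * (Complex.I * ω) + r +
      (s * (Complex.I * ω) + q) * Complex.exp (-(Complex.I * ω) * τ) = 0) :
    ω ^ 4 + (p ^ 2 - s ^ 2 - 2 * r) * ω ^ 2 + (r ^ 2 - q ^ 2) = 0 := by
  have norm_delay : ‖Complex.exp (-(Complex.I * ω) * τ)‖ = 1 := by
    rw [Complex.norm_exp]
    simp
  have norm_eq : ‖(Complex.I * ω) ^ 2 + p * (Complex.I * ω) + r‖ = ‖s * (Complex.I * ω) + q‖ := by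
    rw [eq_neg_of_add_eq_zero_left h, norm_neg, norm_mul, norm_delay, mul_one]
  have left_cartesian : (Complex.I * ω) ^ 2 + p * (Complex.I * ω) + r =
      ((r - ω ^ 2 : ℝ) : ℂ) + ((p * ω : ℝ) : ℂ) * Complex.I := by
    push_cast
    linear_combination (ω : ℂ) ^ 2 * Complex.I_sq
  have right_cartesian : s * (Complex.I * ω) + q = (q : ℂ) + ((s * ω : ℝ) : ℂ) * Complex.I := by
    push_cast
    ring
  have normSq_eq : (r - ω ^ 2) ^ 2 + (p * ω) ^ 2 = q ^ 2 + (s * ω) ^ 2 := by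
    rw [← Complex.normSq_add_mul_I, ← Complex.normSq_add_mul_I, ← left_cartesian,
      ← right_cartesian, Complex.normSq_eq_norm_sq, Complex.normSq_eq_norm_sq, norm_eq]
  linear_combination normSq_eq

theorem frequency_quartic_pos {p r s q ω : ℝ} (hps : s ^ 2 + 2 * r < p ^ 2) (hqr : q ^ 2 ≤ r ^ 2)
    (hω : ω ≠ 0) : 0 < ω ^ 4 + (p ^ 2 - s ^ 2 - 2 * r) * ω ^ 2 + (r ^ 2 - q ^ 2) := by
  have quadratic_coeff_pos : 0 < p ^ 2 - s ^ 2 - 2 * r := by linarith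
  exact add_pos_of_pos_of_nonneg (by positivity) (sub_nonneg.mpr hqr)

theorem nine_lt_sq_mul_pi_sq {k : ℕ} (hk : k ≠ 0) : 9 < (k : ℝ) ^ 2 * Real.pi ^ 2 := by
  have one_le_k : (1 : ℝ) ≤ k := Nat.one_le_cast.mpr (Nat.one_le_iff_ne_zero.mpr hk)
  have three_lt : 3 < k * Real.pi := by nlinarith [Real.pi_gt_three]
  nlinarith

theorem sk_sq_add_two_mul_rk_lt_pk_sq {ε : ℝ} (hε : 0 ≤ ε) {k : ℕ} (hk : k ≠ 0) :
    sk ^ 2 + 2 * rk ε k < pk ε k ^ 2 := by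
  set x : ℝ := (k : ℝ) ^ 2 * Real.pi ^ 2 with hx
  have nine_lt_x : 9 < x := nine_lt_sq_mul_pi_sq hk
  have gap_eq : pk ε k ^ 2 - (sk ^ 2 + 2 * rk ε k) =
      16 * (ε ^ 2 + 1) * x ^ 2 + 8 * ε * x + 1 - (23 / 3) ^ 2 := by
    simp only [pk, rk, sk, hx]
    ring
  have ε_terms_nonneg : 0 ≤ 16 * ε ^ 2 * x ^ 2 + 8 * ε * x := by positivity
  nlinarith

/-- The diffusion ratio at which `λ = 0` is a root of `D_k`, that is, the zero of
`ε ↦ r_k + q_k`; for `k = 1` it is `ε*`. For `k = 0` the denominator vanishes and the value is the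
meaningless `0`. -/
noncomputable def zeroRootRatio (k : ℕ) : ℝ :=
  (4 * ((k : ℝ) ^ 2 * Real.pi ^ 2) / 3 - 9) /
    (16 * ((k : ℝ) ^ 2 * Real.pi ^ 2) ^ 2 + 36 * ((k : ℝ) ^ 2 * Real.pi ^ 2))

theorem zeroRootRatio_one : zeroRootRatio 1 = epsStar := by
  simp only [zeroRootRatio, epsStar, Nat.cast_one, one_pow, one_mul, ← pow_mul]

theorem zeroRootRatio_pos {k : ℕ} (hk : k ≠ 0) : 0 < zeroRootRatio k :=
  div_pos (by linarith [nine_lt_sq_mul_pi_sq hk]) (by positivity)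

theorem rk_add_qk_nonneg_iff {ε : ℝ} {k : ℕ} (hk : k ≠ 0) :
    0 ≤ rk ε k + qk ε k ↔ zeroRootRatio k ≤ ε := by
  set x : ℝ := (k : ℝ) ^ 2 * Real.pi ^ 2 with hx
  have sum_eq : rk ε k + qk ε k = ε * (16 * x ^ 2 + 36 * x) - (4 * x / 3 - 9) := by
    simp only [rk, qk, hx]
    ring
  rw [sum_eq, sub_nonneg, zeroRootRatio, div_le_iff₀ (by positivity)]

theorem qk_le_rk {ε : ℝ} (hε : 0 ≤ ε) {k : ℕ} (hk : k ≠ 0) : qk ε k ≤ rk ε k := by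
  set x : ℝ := (k : ℝ) ^ 2 * Real.pi ^ 2 with hx
  have nine_lt_x : 9 < x := nine_lt_sq_mul_pi_sq hk
  have sub_eq : rk ε k - qk ε k = 4 * ε * x * (4 * x - 9) + (28 / 3 * x - 9) := by
    simp only [rk, qk, hx]
    ring
  have ε_term_nonneg : 0 ≤ 4 * ε * x * (4 * x - 9) :=
    mul_nonneg (by positivity) (by linarith)
  linarith

theorem qk_sq_le_rk_sq {ε : ℝ} {k : ℕ} (hk : k ≠ 0) (hε : zeroRootRatio k ≤ ε) :
    qk ε k ^ 2 ≤ rk ε k ^ 2 := by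
  have neg_rk_le : -rk ε k ≤ qk ε k := by linarith [(rk_add_qk_nonneg_iff hk).mpr hε]
  exact sq_le_sq' neg_rk_le (qk_le_rk ((zeroRootRatio_pos hk).le.trans hε) hk)

theorem zeroRootRatio_le_epsStar {k : ℕ} (hk : k ≠ 0) : zeroRootRatio k ≤ epsStar := by
  obtain rfl | two_le_k : k = 1 ∨ 2 ≤ k := by lia
  · exact zeroRootRatio_one.le
  set y : ℝ := Real.pi ^ 2 with hy
  set x : ℝ := (k : ℝ) ^ 2 * y with hx
  have nine_lt_y : 9 < y := by nlinarith [Real.pi_gt_three]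
  have four_y_le_x : 4 * y ≤ x := by
    have two_le_cast : (2 : ℝ) ≤ k := Nat.ofNat_le_cast.mpr two_le_k
    exact mul_le_mul_of_nonneg_right (by nlinarith) (sq_nonneg _)
  have cofactor_nonneg : 0 ≤ 64 / 3 * x * y - 144 * (x + y) - 324 := by
    have at_four_y : 0 ≤ 256 / 3 * y ^ 2 - 720 * y - 324 := by nlinarith
    have increment : 0 ≤ (64 / 3 * y - 144) * (x - 4 * y) :=
      mul_nonneg (by linarith) (sub_nonneg.mpr four_y_le_x)
    linarith
  rw [← zeroRootRatio_one, zeroRootRatio, zeroRootRatio,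
    div_le_div_iff₀ (by positivity) (by positivity), ← sub_nonneg]
  simp only [Nat.cast_one, one_pow, one_mul, ← hy, ← hx]
  calc 0 ≤ (x - y) * (64 / 3 * x * y - 144 * (x + y) - 324) :=
        mul_nonneg (by linarith) cofactor_nonneg
    _ = (4 * y / 3 - 9) * (16 * x ^ 2 + 36 * x) - (4 * x / 3 - 9) * (16 * y ^ 2 + 36 * y) := by
        ring

theorem D1_no_purely_imaginary_roots_general {ε : ℝ} (hε : epsStar ≤ ε) {k : ℕ} (hk : k ≠ 0)
    (τ : ℝ) {ω : ℝ} (hω : ω ≠ 0) : Dk ε τ k (Complex.I * (ω : ℂ)) ≠ 0 := by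
  have ratio_le : zeroRootRatio k ≤ ε := (zeroRootRatio_le_epsStar hk).trans hε
  have ε_nonneg : 0 ≤ ε := (zeroRootRatio_pos hk).le.trans ratio_le
  intro root
  exact (frequency_quartic_pos (sk_sq_add_two_mul_rk_lt_pk_sq ε_nonneg hk)
    (qk_sq_le_rk_sq hk ratio_le) hω).ne' (frequency_quartic_eq_zero root)

/-- For `ε = ε*`, every `τ ≥ 0` and every nonzero real `ω`, `D_1(iω; τ, ε*) ≠ 0`;
i.e., the first-mode characteristic function has no nonzero purely imaginary roots
for any delay. -/
theorem D1_no_purely_imaginary_roots (τ : ℝ) (hτ : 0 ≤ τ) (ω : ℝ) (hω : ω ≠ 0) :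
    Dk epsStar τ 1 (Complex.I * (ω : ℂ)) ≠ 0 :=
  D1_no_purely_imaginary_roots_general le_rfl one_ne_zero τ hω
end
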